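/- arXiv:2404.15448 — 2 statements merged into one kernel-verified Lean document; each statement's English description precedes it below -/
import Mathlib

section
/- Let k > 0 and let φ : ℤ → ℝ be an almost periodic function on ℤ. Then the multiset A = {k n + φ(n) : n ∈ ℤ} is an almost periodic set of density 1/k. -/
open MeasureTheory Metric Filter Topology Complex
open scoped ENNReal

noncomputable section

/-- A continuous function `g` is *Bohr almost periodic* if for every `ε > 0` its set of
`ε`-almost periods is relatively dense. -/
def IsBohrAP {V : Type*} [SeminormedAddCommGroup V] (g : V → ℂ) : Prop :=
  Continuous g ∧ ∀ ε : ℝ, 0 < ε → ∃ L : ℝ, 0 < L ∧ ∀ x : V, ∃ τ : V,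
    dist τ x < L ∧ ∀ y : V, ‖g (y + τ) - g y‖ < ε

/-- The counting measure `μ_A = Σ_{n∈ℤ} δ_{a_n}` of the multiset `A = {a_n}_{n∈ℤ}`,
evaluated on a set `S` (counting with multiplicity). -/
def cntZ (a : ℤ → ℝ) (S : Set ℝ) : ℝ≥0∞ :=
  ∑' n : ℤ, S.indicator (fun _ => (1 : ℝ≥0∞)) (a n)

/-- `A = {a_n}_{n∈ℤ}` is an almost periodic set: it is locally finite and the convolution of
`μ_A = Σ_n δ_{a_n}` with every `C^∞` compactly supported function is Bohr almost periodic. -/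
def IsAPSeqZ (a : ℤ → ℝ) : Prop :=
  (∀ r : ℝ, cntZ a (ball 0 r) < ⊤) ∧
    ∀ ψ : ℝ → ℂ, ContDiff ℝ (⊤ : ℕ∞) ψ → HasCompactSupport ψ →
      IsBohrAP fun t : ℝ => ∑' n : ℤ, ψ (t - a n)

/-- `A = {a_n}_{n∈ℤ}` has density `D`: `#(A ∩ (x,x+l))/l → D` as `l → ∞`, uniformly in `x`. -/
def HasDensityZ (a : ℤ → ℝ) (D : ℝ) : Prop :=
  ∀ ε : ℝ, 0 < ε → ∃ l₀ : ℝ, ∀ l : ℝ, l₀ ≤ l → ∀ x : ℝ,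
    |(cntZ a (Set.Ioo x (x + l))).toReal / l - D| < ε

/-- `φ : ℤ → ℝ` is a (Bohr) almost periodic function on `ℤ`. -/
def IsAPZfun (φ : ℤ → ℝ) : Prop :=
  ∀ ε : ℝ, 0 < ε → ∃ L : ℤ, 0 < L ∧ ∀ m : ℤ, ∃ τ : ℤ, |τ - m| ≤ L ∧
    ∀ n : ℤ, |φ (n + τ) - φ n| < ε

/-!
An almost periodic `φ` is bounded, so `k n + φ n` stays within a fixed distance `M` of the lattice
point `k n`. Counting points therefore differs from counting lattice points by a bounded amount,
which gives the density, and a window of fixed length meets boundedly many points, so moving every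
point by a small amount changes `∑ n, ψ (t - a n)` little, uniformly in `t`. If `τ` is a
`δ`-almost period of `φ`, then translating the set by `-k τ` and reindexing `n ↦ n + τ` moves every
point by less than `δ`; hence `k τ` is an almost period of the convolution.
-/

section IntegerCount

variable {R : Type*} [CommRing R] [LinearOrder R] [IsStrictOrderedRing R] [FloorRing R]

theorem card_Icc_ceil_floor_le {u v : R} (h : u ≤ v) :
    ((Finset.Icc ⌈u⌉ ⌊v⌋).card : R) ≤ v - u + 1 := by
  have hcard : ((Finset.Icc ⌈u⌉ ⌊v⌋).card : R) = ((max (⌊v⌋ + 1 - ⌈u⌉) 0 : ℤ) : R) := by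
    rw [Int.card_Icc, ← Int.ofNat_toNat, Int.cast_natCast]
  rw [hcard, Int.cast_max, max_le_iff]
  push_cast
  constructor <;> linarith [Int.le_ceil u, Int.floor_le v]

theorem le_card_Icc_ceil_floor (u v : R) :
    v - u - 1 ≤ ((Finset.Icc ⌈u⌉ ⌊v⌋).card : R) := by
  have hcard : ((⌊v⌋ + 1 - ⌈u⌉ : ℤ) : R) ≤ ((Finset.Icc ⌈u⌉ ⌊v⌋).card : R) := by
    rw [Int.card_Icc]
    exact_mod_cast Int.self_le_toNat _
  push_cast at hcard
  linarith [Int.ceil_lt_add_one u, Int.lt_floor_add_one v]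

end IntegerCount

/-- The indices of the points of the lattice `k ℤ` lying in `[u, v]`, for `k > 0`; see
`mem_latticeIndices`. Given as an integer interval so that its cardinality can be read off. -/
def latticeIndices (k u v : ℝ) : Finset ℤ :=
  Finset.Icc ⌈u / k⌉ ⌊v / k⌋

section Lattice

variable {k : ℝ}

theorem mem_latticeIndices (hk : 0 < k) {u v : ℝ} {n : ℤ} :
    n ∈ latticeIndices k u v ↔ k * n ∈ Set.Icc u v := by
  rw [latticeIndices, Finset.mem_Icc, Int.ceil_le, Int.le_floor, div_le_iff₀ hk, le_div_iff₀ hk,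
    mul_comm k, Set.mem_Icc]

theorem card_latticeIndices_le (hk : 0 < k) {u v : ℝ} (h : u ≤ v) :
    ((latticeIndices k u v).card : ℝ) ≤ (v - u) / k + 1 := by
  rw [sub_div]
  exact card_Icc_ceil_floor_le (by gcongr)

theorem le_card_latticeIndices (k u v : ℝ) :
    (v - u) / k - 1 ≤ ((latticeIndices k u v).card : ℝ) := by
  rw [sub_div]
  exact le_card_Icc_ceil_floor (u / k) (v / k)

variable {M : ℝ} {a : ℤ → ℝ}

theorem preimage_Icc_subset_latticeIndices (hk : 0 < k) (ha : ∀ n, |a n - k * n| < M) (x y : ℝ) :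
    a ⁻¹' Set.Icc x y ⊆ latticeIndices k (x - M) (y + M) := by
  rintro n ⟨hx, hy⟩
  obtain ⟨hl, hr⟩ := abs_lt.1 (ha n)
  rw [Finset.mem_coe, mem_latticeIndices hk]
  constructor <;> linarith

theorem latticeIndices_subset_preimage_Ioo (hk : 0 < k) (ha : ∀ n, |a n - k * n| < M) (x y : ℝ) :
    ↑(latticeIndices k (x + M) (y - M)) ⊆ a ⁻¹' Set.Ioo x y := by
  intro n hn
  obtain ⟨hx, hy⟩ := (mem_latticeIndices hk).1 (Finset.mem_coe.1 hn)
  obtain ⟨hl, hr⟩ := abs_lt.1 (ha n)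
  constructor <;> linarith

theorem preimage_Ioo_subset_latticeIndices (hk : 0 < k) (ha : ∀ n, |a n - k * n| < M) (x y : ℝ) :
    a ⁻¹' Set.Ioo x y ⊆ latticeIndices k (x - M) (y + M) :=
  (Set.preimage_mono Set.Ioo_subset_Icc_self).trans (preimage_Icc_subset_latticeIndices hk ha x y)

end Lattice

section Density

theorem cntZ_eq_encard (a : ℤ → ℝ) (S : Set ℝ) : cntZ a S = ((a ⁻¹' S).encard : ℝ≥0∞) := by
  rw [← ENNReal.tsum_set_one, tsum_subtype (a ⁻¹' S) (fun _ => 1)]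
  rfl

theorem toReal_cntZ (a : ℤ → ℝ) (S : Set ℝ) : (cntZ a S).toReal = (a ⁻¹' S).ncard := by
  rw [cntZ_eq_encard, Set.ncard_def]
  cases (a ⁻¹' S).encard <;> simp

variable {k M : ℝ} {a : ℤ → ℝ}

theorem cntZ_ball_lt_top (hk : 0 < k) (ha : ∀ n, |a n - k * n| < M) (x r : ℝ) :
    cntZ a (ball x r) < ⊤ := by
  rw [cntZ_eq_encard, Real.ball_eq_Ioo, ENat.toENNReal_lt_top, Set.encard_lt_top_iff]
  exact (Finset.finite_toSet _).subset (preimage_Ioo_subset_latticeIndices hk ha _ _)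

theorem abs_toReal_cntZ_Ioo_sub_le (hk : 0 < k) (ha : ∀ n, |a n - k * n| < M) (x : ℝ) {l : ℝ}
    (hl : 0 ≤ l) :
    |(cntZ a (Set.Ioo x (x + l))).toReal - 1 / k * l| ≤ 2 * M / k + 1 := by
  have hM : 0 < M := (abs_nonneg _).trans_lt (ha 0)
  have hsub := preimage_Ioo_subset_latticeIndices hk ha x (x + l)
  have upper : ((a ⁻¹' Set.Ioo x (x + l)).ncard : ℝ) ≤ (l + 2 * M) / k + 1 := calc
    _ ≤ ((latticeIndices k (x - M) (x + l + M)).card : ℝ) := by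
      rw [← Set.ncard_coe_finset]
      exact_mod_cast Set.ncard_le_ncard hsub
    _ ≤ (x + l + M - (x - M)) / k + 1 := card_latticeIndices_le hk (by linarith)
    _ = (l + 2 * M) / k + 1 := by ring
  have lower : (l - 2 * M) / k - 1 ≤ ((a ⁻¹' Set.Ioo x (x + l)).ncard : ℝ) := calc
    _ = (x + l - M - (x + M)) / k - 1 := by ring
    _ ≤ ((latticeIndices k (x + M) (x + l - M)).card : ℝ) := le_card_latticeIndices _ _ _
    _ ≤ _ := by
      rw [← Set.ncard_coe_finset]
      exact_mod_cast Set.ncard_le_ncard (latticeIndices_subset_preimage_Ioo hk ha x (x + l))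
        ((Finset.finite_toSet _).subset hsub)
  rw [toReal_cntZ, abs_le]
  constructor <;> linarith [add_div l (2 * M) k, sub_div l (2 * M) k, one_div_mul_eq_div k l]

theorem hasDensityZ_of_abs_sub_le {D C : ℝ}
    (h : ∀ x l : ℝ, 0 ≤ l → |(cntZ a (Set.Ioo x (x + l))).toReal - D * l| ≤ C) :
    HasDensityZ a D := by
  intro ε hε
  have hC : 0 ≤ C := (abs_nonneg _).trans (h 0 0 le_rfl)
  refine ⟨C / ε + 1, fun l hl x => ?_⟩
  have hl_pos : 0 < l := by
    have : 0 ≤ C / ε := by positivity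
    linarith
  have hCl : C < ε * l := (div_lt_iff₀' hε).1 (by linarith)
  rw [div_sub' hl_pos.ne', abs_div, abs_of_pos hl_pos, div_lt_iff₀ hl_pos, mul_comm l D]
  exact (h x l hl_pos.le).trans_lt hCl

end Density

section Convolution

variable {E : Type*} [NormedAddCommGroup E]

theorem norm_tsum_sub_tsum_le {ι : Type*} {f g : ι → E} {s : Finset ι} {C : ℝ}
    (hf : ∀ i ∉ s, f i = 0) (hg : ∀ i ∉ s, g i = 0) (h : ∀ i ∈ s, ‖f i - g i‖ ≤ C) :
    ‖∑' i, f i - ∑' i, g i‖ ≤ s.card * C := by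
  rw [tsum_eq_sum hf, tsum_eq_sum hg, ← Finset.sum_sub_distrib]
  exact (norm_sum_le_of_le s h).trans_eq (by rw [Finset.sum_const, nsmul_eq_mul])

variable {k M : ℝ} {a : ℤ → ℝ} {ψ : ℝ → E}

theorem apply_sub_eq_zero_of_notMem_latticeIndices (hk : 0 < k) (ha : ∀ n, |a n - k * n| < M)
    {R : ℝ} (hR : ∀ x, R ≤ ‖x‖ → ψ x = 0) (t : ℝ) {n : ℤ}
    (hn : n ∉ latticeIndices k (t - R - M) (t + R + M)) : ψ (t - a n) = 0 := by
  refine hR _ (le_of_not_gt fun hlt => hn ?_)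
  obtain ⟨hl, hr⟩ := abs_lt.1 hlt
  exact preimage_Icc_subset_latticeIndices hk ha _ _ ⟨by linarith, by linarith⟩

theorem exists_forall_norm_tsum_sub_tsum_lt (hk : 0 < k) (hM : 0 ≤ M) (hψ : Continuous ψ)
    (hs : HasCompactSupport ψ) {ε : ℝ} (hε : 0 < ε) :
    ∃ δ > 0, ∀ a b : ℤ → ℝ, (∀ n, |a n - k * n| < M) → (∀ n, |b n - k * n| < M) →
      (∀ n, |a n - b n| < δ) → ∀ t, ‖∑' n, ψ (t - a n) - ∑' n, ψ (t - b n)‖ < ε := by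
  obtain ⟨R, hR_pos, hR⟩ := hs.exists_pos_le_norm
  set C : ℝ := 2 * (R + M) / k + 1 with hC
  have hC_pos : 0 < C := by positivity
  obtain ⟨δ, hδ, hψδ⟩ := Metric.uniformContinuous_iff.1
    (hs.uniformContinuous_of_continuous hψ) (ε / (2 * C)) (by positivity)
  refine ⟨δ, hδ, fun a b ha hb hab t => ?_⟩
  have hcard : ((latticeIndices k (t - R - M) (t + R + M)).card : ℝ) ≤ C := calc
    _ ≤ (t + R + M - (t - R - M)) / k + 1 := card_latticeIndices_le hk (by linarith)
    _ = C := by rw [hC]; ring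
  have hterm (n : ℤ) : ‖ψ (t - a n) - ψ (t - b n)‖ ≤ ε / (2 * C) := by
    rw [← dist_eq_norm]
    exact (hψδ (by rw [dist_sub_left]; exact hab n)).le
  calc
    _ ≤ ((latticeIndices k (t - R - M) (t + R + M)).card : ℝ) * (ε / (2 * C)) :=
      norm_tsum_sub_tsum_le (fun _ => apply_sub_eq_zero_of_notMem_latticeIndices hk ha hR t)
        (fun _ => apply_sub_eq_zero_of_notMem_latticeIndices hk hb hR t) fun n _ => hterm n
    _ ≤ C * (ε / (2 * C)) := by gcongr
    _ = ε / 2 := by field_simp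
    _ < ε := half_lt_self hε

theorem uniformContinuous_tsum_sub (hk : 0 < k) (ha : ∀ n, |a n - k * n| < M)
    (hψ : Continuous ψ) (hs : HasCompactSupport ψ) :
    UniformContinuous fun t => ∑' n, ψ (t - a n) := by
  have hM : 0 < M := (abs_nonneg _).trans_lt (ha 0)
  rw [Metric.uniformContinuous_iff]
  intro ε hε
  obtain ⟨δ, hδ, h⟩ := exists_forall_norm_tsum_sub_tsum_lt hk (M := M + 1) (by positivity) hψ hs hε
  refine ⟨min δ 1, by positivity, fun s t hst => ?_⟩
  rw [Real.dist_eq, lt_min_iff] at hst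
  have ha' (n : ℤ) : |a n - k * n| < M + 1 := (ha n).trans (lt_add_one M)
  have hshift (n : ℤ) : |a n + (t - s) - k * n| < M + 1 := calc
    _ = |(a n - k * n) - (s - t)| := by ring_nf
    _ ≤ |a n - k * n| + |s - t| := abs_sub _ _
    _ < M + 1 := add_lt_add (ha n) hst.2
  -- Moving the argument from `t` to `s` amounts to moving every point by `t - s`.
  have hsum : ∑' n, ψ (s - a n) = ∑' n, ψ (t - (a n + (t - s))) :=
    tsum_congr fun n => by ring_nf
  rw [dist_eq_norm, hsum]
  exact h _ _ hshift ha' (fun n => by simpa [abs_sub_comm] using hst.1) t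

theorem tsum_add_mul_sub_eq (k : ℝ) (φ : ℤ → ℝ) (ψ : ℝ → E) (y : ℝ) (τ : ℤ) :
    ∑' n : ℤ, ψ (y + k * τ - (k * n + φ n)) = ∑' n : ℤ, ψ (y - (k * n + φ (n + τ))) := by
  rw [← (Equiv.addRight τ).tsum_eq]
  refine tsum_congr fun n => congrArg ψ ?_
  rw [Equiv.coe_addRight]
  push_cast
  ring

end Convolution

namespace IsAPZfun

variable {φ : ℤ → ℝ}

theorem exists_forall_abs_lt (hφ : IsAPZfun φ) : ∃ M : ℝ, ∀ n, |φ n| < M := by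
  obtain ⟨L, -, h⟩ := hφ 1 one_pos
  refine ⟨(∑ j ∈ Finset.Icc (-L) L, |φ j|) + 1, fun n => ?_⟩
  obtain ⟨τ, hτ, hφτ⟩ := h (-n)
  have hmem : n + τ ∈ Finset.Icc (-L) L := by
    rw [Finset.mem_Icc, ← abs_le, add_comm, ← sub_neg_eq_add]
    exact hτ
  have hle : |φ (n + τ)| ≤ ∑ j ∈ Finset.Icc (-L) L, |φ j| :=
    Finset.single_le_sum (f := fun j => |φ j|) (fun _ _ => abs_nonneg _) hmem
  have hdiff : |φ n| - |φ (n + τ)| < 1 :=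
    (abs_sub_abs_le_abs_sub _ _).trans_lt (abs_sub_comm (φ n) _ ▸ hφτ n)
  linarith

theorem exists_dist_mul_lt (hφ : IsAPZfun φ) {k : ℝ} (hk : 0 < k) {ε : ℝ} (hε : 0 < ε) :
    ∃ L > 0, ∀ x : ℝ, ∃ τ : ℤ, dist (k * τ) x < L ∧ ∀ n, |φ (n + τ) - φ n| < ε := by
  obtain ⟨L, hL, h⟩ := hφ ε hε
  refine ⟨k * (L + 1), by positivity, fun x => ?_⟩
  obtain ⟨τ, hτ, hφτ⟩ := h (round (x / k))
  refine ⟨τ, ?_, hφτ⟩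
  have hτ' : |(τ : ℝ) - round (x / k)| ≤ L := by exact_mod_cast hτ
  have hround : |(round (x / k) : ℝ) - x / k| < 1 := by
    rw [abs_sub_comm]
    exact (abs_sub_round _).trans_lt one_half_lt_one
  calc dist (k * τ) x = k * |τ - x / k| := by
        rw [Real.dist_eq, ← abs_of_pos hk, ← abs_mul, abs_of_pos hk, mul_sub,
          mul_div_cancel₀ x hk.ne']
    _ ≤ k * (|(τ : ℝ) - round (x / k)| + |round (x / k) - x / k|) := by
        gcongr
        exact abs_sub_le _ _ _
    _ < k * (L + 1) := by
        gcongr k * ?_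
        exact add_lt_add_of_le_of_lt hτ' hround

theorem isBohrAP_tsum_sub (hφ : IsAPZfun φ) {k : ℝ} (hk : 0 < k) {ψ : ℝ → ℂ} (hψ : Continuous ψ)
    (hs : HasCompactSupport ψ) : IsBohrAP fun t : ℝ => ∑' n : ℤ, ψ (t - (k * n + φ n)) := by
  obtain ⟨M, hM⟩ := hφ.exists_forall_abs_lt
  have hM_nonneg : 0 ≤ M := (abs_nonneg _).trans (hM 0).le
  refine ⟨(uniformContinuous_tsum_sub hk (by simpa using hM) hψ hs).continuous, fun ε hε => ?_⟩
  obtain ⟨δ, hδ, hclose⟩ := exists_forall_norm_tsum_sub_tsum_lt hk hM_nonneg hψ hs hε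
  obtain ⟨L, hL, hperiod⟩ := hφ.exists_dist_mul_lt hk hδ
  refine ⟨L, hL, fun x => ?_⟩
  obtain ⟨τ, hτ, hφτ⟩ := hperiod x
  refine ⟨k * τ, hτ, fun y => ?_⟩
  beta_reduce
  rw [tsum_add_mul_sub_eq]
  exact hclose _ _ (fun n => by simpa using hM (n + τ)) (by simpa using hM)
    (by simpa using hφτ) y

end IsAPZfun

/-- Let `k > 0` and let `φ : ℤ → ℝ` be an almost periodic function on `ℤ`.
Then the multiset `A = {k n + φ(n) : n ∈ ℤ}` is an almost periodic set of density `1/k`. -/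
theorem statement11 (k : ℝ) (hk : 0 < k) (φ : ℤ → ℝ) (hφ : IsAPZfun φ) :
    IsAPSeqZ (fun n : ℤ => k * n + φ n) ∧
      HasDensityZ (fun n : ℤ => k * n + φ n) (1 / k) := by
  obtain ⟨M, hM⟩ := hφ.exists_forall_abs_lt
  have ha (n : ℤ) : |k * n + φ n - k * n| < M := by simpa using hM n
  exact ⟨⟨cntZ_ball_lt_top hk ha 0, fun ψ hψ hs => hφ.isBohrAP_tsum_sub hk hψ.continuous hs⟩,
    hasDensityZ_of_abs_sub_le fun x _ hl => abs_toReal_cntZ_Ioo_sub_le hk ha x hl⟩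

end
end

section
/- Let D > 0, let φ : ℤ → ℝ be bounded, and set a_n = n/D + φ(n), assuming a_n ≠ 0 for all n ∈ ℤ. Then: (i) the partial sums Σ_{n : |a_n| ≤ N} 1/a_n are bounded uniformly in N; (ii) Σ_{n∈ℕ} |1/a_n + 1/a_{−n}| < ∞; and (iii) the product f(z) = (1 − z/a_0) ∏_{n=1}^∞ (1 − z/a_n)(1 − z/a_{−n}) converges locally uniformly on ℂ and defines an entire function of exponential growth, i.e., there exist C, σ > 0 with |f(z)| ≤ C e^{σ|z|} for all z ∈ ℂ. -/
open Filter Topology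

noncomputable section

/-! Since `a n = n / D + O(1)` with `a` nowhere zero, `1 / a n = O(1 / (|n| + 1))`, while
`a n + a (-n) = O(1)`; hence `1 / a n + 1 / a (-n) = O(1 / (|n| + 1) ^ 2)`, which is (ii).
For (i), the set `{n | |a n| ≤ N}` differs from a symmetric interval by boundedly many integers, and
over a symmetric interval the sum is controlled by (ii). For (iii), a pair of factors is
`1 - (1 / a n + 1 / a (-n)) z + z ^ 2 / (a n a (-n))`, of norm at most
`(1 + |1 / a n + 1 / a (-n)| |z|) (1 + (K |z| / n) ^ 2)`: the first factors multiply to at most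
`exp (S |z|)` by (ii), and the second ones to at most `exp (π K |z|)` by Euler's product for
`sinh (π K |z|)`. -/

section EulerProduct

theorem tendsto_euler_sinh_prod (s : ℝ) :
    Tendsto (fun N : ℕ ↦ Real.pi * s * ∏ j ∈ Finset.range N, (1 + s ^ 2 / ((j : ℝ) + 1) ^ 2))
      atTop (𝓝 (Real.sinh (Real.pi * s))) := by
  have hsin : Complex.sin (Real.pi * (s * Complex.I)) * -Complex.I
      = (Real.sinh (Real.pi * s) : ℂ) := by
    rw [← mul_assoc, Complex.sin_mul_I, mul_assoc, mul_neg, Complex.I_mul_I, neg_neg, mul_one]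
    push_cast
    rfl
  have hlim := (Complex.tendsto_euler_sin_prod (s * Complex.I)).mul_const (-Complex.I)
  rw [hsin] at hlim
  refine tendsto_ofReal_iff.1 (hlim.congr fun N ↦ ?_)
  push_cast
  simp only [mul_pow, Complex.I_sq, mul_neg, mul_one, neg_div, sub_neg_eq_add]
  linear_combination (-Real.pi * s * ∏ j ∈ Finset.range N, (1 + (s : ℂ) ^ 2 / ((j : ℂ) + 1) ^ 2))
    * Complex.I_mul_I

theorem sinh_le_mul_exp (x : ℝ) : Real.sinh x ≤ x * Real.exp x := by
  have hneg : (1 - 2 * x) * Real.exp x ≤ Real.exp (-x) :=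
    calc (1 - 2 * x) * Real.exp x ≤ Real.exp (-(2 * x)) * Real.exp x := by
          gcongr
          exact Real.one_sub_le_exp_neg (2 * x)
      _ = Real.exp (-x) := by rw [← Real.exp_add]; ring_nf
  rw [Real.sinh_eq]
  linarith

theorem prod_one_add_sq_div_sq_le_exp (s : ℝ) (N : ℕ) :
    ∏ j ∈ Finset.range N, (1 + s ^ 2 / ((j : ℝ) + 1) ^ 2) ≤ Real.exp (Real.pi * |s|) := by
  rcases eq_or_ne s 0 with rfl | hs
  · simp
  have hpos : 0 < Real.pi * |s| := by positivity
  have hmono : Monotone fun N : ℕ ↦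
      Real.pi * |s| * ∏ j ∈ Finset.range N, (1 + |s| ^ 2 / ((j : ℝ) + 1) ^ 2) := by
    refine monotone_nat_of_le_succ fun n ↦ ?_
    rw [Finset.prod_range_succ]
    gcongr
    exact le_mul_of_one_le_right (by positivity) (le_add_of_nonneg_right (by positivity))
  have hle := (hmono.ge_of_tendsto (tendsto_euler_sinh_prod |s|) N).trans (sinh_le_mul_exp _)
  simpa only [sq_abs] using le_of_mul_le_mul_left hle hpos

end EulerProduct

section PairedProduct

theorem norm_one_sub_mul_mul_one_sub_mul_le {R : Type*} [NormedCommRing R] [NormOneClass R]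
    (u v z : R) :
    ‖(1 - u * z) * (1 - v * z)‖ ≤ (1 + ‖u + v‖ * ‖z‖) * (1 + ‖u * v‖ * ‖z‖ ^ 2) :=
  calc ‖(1 - u * z) * (1 - v * z)‖ = ‖1 - (u + v) * z + u * v * z ^ 2‖ := by ring_nf
    _ ≤ 1 + ‖u + v‖ * ‖z‖ + ‖u * v‖ * ‖z‖ ^ 2 := by
      refine (norm_add_le _ _).trans (add_le_add ((norm_sub_le _ _).trans ?_) ?_)
      · rw [norm_one]
        gcongr
        exact norm_mul_le _ _
      · exact (norm_mul_le _ _).trans (by gcongr; exact norm_pow_le _ _)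
    _ ≤ (1 + ‖u + v‖ * ‖z‖) * (1 + ‖u * v‖ * ‖z‖ ^ 2) := by
      have : 0 ≤ ‖u + v‖ * ‖z‖ * (‖u * v‖ * ‖z‖ ^ 2) := by positivity
      linarith

theorem norm_prod_one_sub_mul_mul_one_sub_mul_le {R : Type*} [NormedCommRing R] [NormOneClass R]
    {u v : ℕ → R} {K : ℝ} (hadd : Summable fun n ↦ ‖u n + v n‖)
    (hmul : ∀ n : ℕ, ‖u n * v n‖ ≤ (K / (n + 1)) ^ 2) (N : ℕ) (z : R) :
    ‖∏ n ∈ Finset.range N, ((1 - u n * z) * (1 - v n * z))‖ ≤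
      Real.exp ((∑' n, ‖u n + v n‖ + Real.pi * |K|) * ‖z‖) := by
  have hfactor (n : ℕ) : ‖(1 - u n * z) * (1 - v n * z)‖ ≤
      (1 + ‖u n + v n‖ * ‖z‖) * (1 + (K * ‖z‖) ^ 2 / ((n : ℝ) + 1) ^ 2) := by
    refine (norm_one_sub_mul_mul_one_sub_mul_le _ _ _).trans ?_
    rw [mul_pow, mul_div_right_comm, ← div_pow]
    gcongr
    exact hmul n
  have hlin : ∏ n ∈ Finset.range N, (1 + ‖u n + v n‖ * ‖z‖) ≤
      Real.exp ((∑' n, ‖u n + v n‖) * ‖z‖) := by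
    refine (Real.prod_one_add_le_exp_sum _ fun n ↦ by positivity).trans ?_
    rw [← Finset.sum_mul]
    gcongr
    exact hadd.sum_le_tsum _ fun _ _ ↦ norm_nonneg _
  have hquad : ∏ n ∈ Finset.range N, (1 + (K * ‖z‖) ^ 2 / ((n : ℝ) + 1) ^ 2) ≤
      Real.exp (Real.pi * |K| * ‖z‖) := by
    simpa only [abs_mul, abs_norm, mul_assoc] using prod_one_add_sq_div_sq_le_exp (K * ‖z‖) N
  calc ‖∏ n ∈ Finset.range N, ((1 - u n * z) * (1 - v n * z))‖
      ≤ ∏ n ∈ Finset.range N, ‖(1 - u n * z) * (1 - v n * z)‖ := Finset.norm_prod_le _ _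
    _ ≤ ∏ n ∈ Finset.range N,
          (1 + ‖u n + v n‖ * ‖z‖) * (1 + (K * ‖z‖) ^ 2 / ((n : ℝ) + 1) ^ 2) :=
      Finset.prod_le_prod (fun _ _ ↦ norm_nonneg _) fun n _ ↦ hfactor n
    _ ≤ Real.exp ((∑' n, ‖u n + v n‖) * ‖z‖) * Real.exp (Real.pi * |K| * ‖z‖) := by
      rw [Finset.prod_mul_distrib]
      gcongr
    _ = Real.exp ((∑' n, ‖u n + v n‖ + Real.pi * |K|) * ‖z‖) := by
      rw [← Real.exp_add, add_mul]

theorem tendstoLocallyUniformly_prod_one_sub_mul_mul_one_sub_mul {R : Type*} [NormedCommRing R]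
    [NormOneClass R] [CompleteSpace R] [LocallyCompactSpace R] {u v : ℕ → R}
    (hadd : Summable fun n ↦ ‖u n + v n‖) (hmul : Summable fun n ↦ ‖u n * v n‖) :
    TendstoLocallyUniformly
      (fun N z ↦ ∏ n ∈ Finset.range N, ((1 - u n * z) * (1 - v n * z)))
      (fun z ↦ ∏' n, ((1 - u n * z) * (1 - v n * z))) atTop := by
  have hpair (n : ℕ) (z : R) :
      (1 - u n * z) * (1 - v n * z) = 1 + (-((u n + v n) * z) + u n * v n * z ^ 2) := by ring
  simp only [hpair]
  rw [tendstoLocallyUniformly_iff_forall_isCompact]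
  intro s hs
  obtain ⟨r, hr⟩ := hs.isBounded.exists_norm_le
  refine (Summable.hasProdUniformlyOn_nat_one_add hs
    ((hadd.mul_right r).add (hmul.mul_right (r ^ 2))) (.of_forall fun n z hz ↦ ?_)
    fun n ↦ by fun_prop).tendstoUniformlyOn_finsetRange
  have hzr := hr z hz
  refine (norm_add_le _ _).trans (add_le_add ?_ ?_)
  · rw [norm_neg]
    exact (norm_mul_le _ _).trans (by gcongr)
  · exact (norm_mul_le _ _).trans (by gcongr; exact (norm_pow_le _ _).trans (by gcongr))

theorem summable_sq_div_nat_add_one (K : ℝ) : Summable fun n : ℕ ↦ (K / ((n : ℝ) + 1)) ^ 2 := by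
  have h := (summable_nat_add_iff 1).2 (Real.summable_one_div_nat_pow.2 one_lt_two)
  refine (h.mul_left (K ^ 2)).congr fun n ↦ ?_
  rw [div_pow, mul_one_div, Nat.cast_add_one]

theorem exists_differentiable_tendstoLocallyUniformly_prod (w : ℂ) {u v : ℕ → ℂ} {K : ℝ}
    (hadd : Summable fun n ↦ ‖u n + v n‖) (hmul : ∀ n : ℕ, ‖u n * v n‖ ≤ (K / (n + 1)) ^ 2) :
    ∃ f : ℂ → ℂ,
      TendstoLocallyUniformly
        (fun (N : ℕ) z ↦ (1 - w * z) * ∏ n ∈ Finset.range N, ((1 - u n * z) * (1 - v n * z)))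
        f atTop ∧
      Differentiable ℂ f ∧
      ∃ σ : ℝ, 0 < σ ∧ ∀ z, ‖f z‖ ≤ Real.exp (σ * ‖z‖) := by
  have hprod := tendstoLocallyUniformly_prod_one_sub_mul_mul_one_sub_mul hadd
    ((summable_sq_div_nat_add_one K).of_nonneg_of_le (fun _ ↦ norm_nonneg _) hmul)
  have hprod_univ := tendstoLocallyUniformlyOn_univ.2 hprod
  have hdiff : Differentiable ℂ fun z ↦ ∏' n, ((1 - u n * z) * (1 - v n * z)) :=
    differentiableOn_univ.1 <|
      hprod_univ.differentiableOn (.of_forall fun N ↦ by fun_prop) isOpen_univ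
  have hconst : TendstoLocallyUniformly (fun (_ : ℕ) z ↦ 1 - w * z) (fun z ↦ 1 - w * z) atTop :=
    TendstoUniformly.tendstoLocallyUniformly fun _ hU ↦
      .of_forall fun _ _ ↦ refl_mem_uniformity hU
  refine ⟨fun z ↦ (1 - w * z) * ∏' n, ((1 - u n * z) * (1 - v n * z)),
    hconst.fun_mul₀ hprod (by fun_prop) hdiff.continuous, by fun_prop,
    ‖w‖ + (∑' n, ‖u n + v n‖ + Real.pi * |K|) + 1, by positivity, fun z ↦ ?_⟩
  have hw : ‖1 - w * z‖ ≤ Real.exp (‖w‖ * ‖z‖) :=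
    calc ‖1 - w * z‖ ≤ ‖w‖ * ‖z‖ + 1 := by
          simpa only [norm_one, norm_mul, add_comm] using norm_sub_le 1 (w * z)
      _ ≤ Real.exp (‖w‖ * ‖z‖) := Real.add_one_le_exp _
  have htprod : ‖∏' n, ((1 - u n * z) * (1 - v n * z))‖ ≤
      Real.exp ((∑' n, ‖u n + v n‖ + Real.pi * |K|) * ‖z‖) :=
    le_of_tendsto (hprod_univ.tendsto_at (Set.mem_univ z)).norm
      (.of_forall fun N ↦ norm_prod_one_sub_mul_mul_one_sub_mul_le hadd hmul N z)
  calc ‖(1 - w * z) * ∏' n, ((1 - u n * z) * (1 - v n * z))‖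
      ≤ Real.exp (‖w‖ * ‖z‖) * Real.exp ((∑' n, ‖u n + v n‖ + Real.pi * |K|) * ‖z‖) := by
        rw [norm_mul]
        gcongr
    _ ≤ Real.exp ((‖w‖ + (∑' n, ‖u n + v n‖ + Real.pi * |K|) + 1) * ‖z‖) := by
        rw [← Real.exp_add, ← add_mul]
        gcongr Real.exp (?_ * ‖z‖)
        exact le_add_of_nonneg_right zero_le_one

end PairedProduct

section SymmetricSums

variable {E : Type*}

theorem sum_Icc_neg_eq_add_sum_range [AddCommGroup E] (g : ℤ → E) (R : ℕ) :
    ∑ n ∈ Finset.Icc (-(R : ℤ)) R, g n =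
      g 0 + ∑ n ∈ Finset.range R, (g ((n : ℤ) + 1) + g (-((n : ℤ) + 1))) := by
  induction R with
  | zero => simp
  | succ R ih =>
    rw [Finset.sum_range_succ, ← add_assoc, ← ih]
    push_cast
    rw [Finset.sum_Icc_succ_eq_add_endpoints, add_comm]

theorem card_le_of_forall_lt_abs_le {s : Finset ℤ} {x y : ℝ} (hxy : x ≤ y)
    (hs : ∀ n ∈ s, x < |(n : ℝ)| ∧ |(n : ℝ)| ≤ y) : (s.card : ℝ) ≤ 2 * (y - x + 1) := by
  have hsub : s ⊆ Finset.Ioc ⌊x⌋ ⌊y⌋ ∪ (Finset.Ioc ⌊x⌋ ⌊y⌋).image Neg.neg := by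
    intro n hn
    obtain ⟨hx, hy⟩ := hs n hn
    have habs : |n| ∈ Finset.Ioc ⌊x⌋ ⌊y⌋ := by
      rw [Finset.mem_Ioc, Int.floor_lt, Int.le_floor, Int.cast_abs]
      exact ⟨hx, hy⟩
    rcases abs_choice n with h | h
    · exact Finset.mem_union_left _ (h ▸ habs)
    · exact Finset.mem_union_right _ (Finset.mem_image.2 ⟨-n, h ▸ habs, neg_neg n⟩)
  have hIoc : ((Finset.Ioc ⌊x⌋ ⌊y⌋).card : ℝ) ≤ y - x + 1 := by
    have hcard : ((Finset.Ioc ⌊x⌋ ⌊y⌋).card : ℝ) = ⌊y⌋ - ⌊x⌋ :=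
      mod_cast Int.card_Ioc_of_le _ _ (Int.floor_mono hxy)
    linarith [Int.floor_le y, Int.lt_floor_add_one x]
  calc (s.card : ℝ) ≤ (Finset.Ioc ⌊x⌋ ⌊y⌋).card + (Finset.Ioc ⌊x⌋ ⌊y⌋).card :=
        mod_cast (Finset.card_le_card hsub).trans
          ((Finset.card_union_le _ _).trans (Nat.add_le_add_left Finset.card_image_le _))
    _ ≤ 2 * (y - x + 1) := by linarith

theorem norm_sum_le_of_subset_Icc_neg [SeminormedAddCommGroup E] {g : ℤ → E} {B : ℝ}
    (hg : ∀ n, ‖g n‖ ≤ B) (hsum : Summable fun n : ℕ ↦ ‖g ((n : ℤ) + 1) + g (-((n : ℤ) + 1))‖)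
    {s : Finset ℤ} {R : ℕ} (hs : s ⊆ Finset.Icc (-(R : ℤ)) R) :
    ‖∑ n ∈ s, g n‖ ≤ B + ∑' n : ℕ, ‖g ((n : ℤ) + 1) + g (-((n : ℤ) + 1))‖ +
      (Finset.Icc (-(R : ℤ)) R \ s).card * B := by
  have hIcc : ‖∑ n ∈ Finset.Icc (-(R : ℤ)) R, g n‖ ≤
      B + ∑' n : ℕ, ‖g ((n : ℤ) + 1) + g (-((n : ℤ) + 1))‖ := by
    rw [sum_Icc_neg_eq_add_sum_range]
    exact (norm_add_le _ _).trans (add_le_add (hg 0) ((norm_sum_le _ _).trans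
      (hsum.sum_le_tsum _ fun _ _ ↦ norm_nonneg _)))
  have hsdiff : ‖∑ n ∈ Finset.Icc (-(R : ℤ)) R \ s, g n‖ ≤
      (Finset.Icc (-(R : ℤ)) R \ s).card * B := by
    simpa only [nsmul_eq_mul] using (norm_sum_le _ _).trans
      (Finset.sum_le_card_nsmul _ _ B fun n _ ↦ hg n)
  have hsplit := eq_sub_of_add_eq' (Finset.sum_sdiff (f := g) hs)
  rw [hsplit]
  exact (norm_sub_le _ _).trans (add_le_add hIcc hsdiff)

end SymmetricSums

section PerturbedLattice

variable {𝕜 : Type*} [NormedField 𝕜] {a : ℤ → 𝕜} {D : 𝕜} {M K : ℝ}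

theorem norm_add_neg_le (ha : ∀ n, ‖a n - n / D‖ ≤ M) (n : ℤ) : ‖a n + a (-n)‖ ≤ 2 * M :=
  calc ‖a n + a (-n)‖ = ‖(a n - n / D) + (a (-n) - (-n : ℤ) / D)‖ := by
        push_cast
        ring_nf
    _ ≤ 2 * M := (norm_add_le _ _).trans (by linarith [ha n, ha (-n)])

theorem norm_inv_add_inv_neg_le (ha : ∀ n, ‖a n - n / D‖ ≤ M) (hne : ∀ n, a n ≠ 0) (n : ℤ) :
    ‖(a n)⁻¹ + (a (-n))⁻¹‖ ≤ 2 * M * ‖(a n)⁻¹ * (a (-n))⁻¹‖ := by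
  rw [inv_add_inv (hne n) (hne (-n)), div_eq_mul_inv, mul_inv, norm_mul]
  gcongr
  exact norm_add_neg_le ha n

theorem norm_inv_succ_mul_inv_neg_succ_le (hK : ∀ n, ‖(a n)⁻¹‖ ≤ K / (|(n : ℝ)| + 1)) (n : ℕ) :
    ‖(a ((n : ℤ) + 1))⁻¹ * (a (-((n : ℤ) + 1)))⁻¹‖ ≤ (K / (n + 1)) ^ 2 := by
  have hK0 : 0 ≤ K := by simpa using (norm_nonneg _).trans (hK 0)
  have hle {m : ℤ} (hm : |(m : ℝ)| = n + 1) : ‖(a m)⁻¹‖ ≤ K / (n + 1) :=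
    (hK m).trans (by rw [hm]; gcongr; exact le_add_of_nonneg_right zero_le_one)
  have habs : |(((n : ℤ) + 1 : ℤ) : ℝ)| = n + 1 := by
    push_cast
    exact abs_of_nonneg (by positivity)
  have hneg : |((-((n : ℤ) + 1) : ℤ) : ℝ)| = n + 1 := by rw [Int.cast_neg, abs_neg, habs]
  rw [norm_mul, sq]
  exact mul_le_mul (hle habs) (hle hneg) (norm_nonneg _) (by positivity)

theorem summable_norm_inv_add_inv_neg (ha : ∀ n, ‖a n - n / D‖ ≤ M) (hne : ∀ n, a n ≠ 0)
    (hK : ∀ n, ‖(a n)⁻¹‖ ≤ K / (|(n : ℝ)| + 1)) :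
    Summable fun n : ℕ ↦ ‖(a ((n : ℤ) + 1))⁻¹ + (a (-((n : ℤ) + 1)))⁻¹‖ := by
  have hM : 0 ≤ M := (norm_nonneg _).trans (ha 0)
  refine ((summable_sq_div_nat_add_one K).mul_left (2 * M)).of_nonneg_of_le
    (fun _ ↦ norm_nonneg _) fun n ↦ (norm_inv_add_inv_neg_le ha hne _).trans ?_
  gcongr
  exact norm_inv_succ_mul_inv_neg_succ_le hK n

variable [NormedAlgebra ℝ 𝕜]

theorem norm_intCast_eq_abs (n : ℤ) : ‖(n : 𝕜)‖ = |(n : ℝ)| := by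
  simpa only [map_intCast, Real.norm_eq_abs] using norm_algebraMap' 𝕜 (n : ℝ)

theorem isEquivalent_intCast_div (hD : D ≠ 0) (ha : ∀ n, ‖a n - n / D‖ ≤ M) :
    Asymptotics.IsEquivalent cofinite a fun n : ℤ ↦ (n : 𝕜) / D := by
  have hnorm : Tendsto (fun n : ℤ ↦ ‖(n : 𝕜) / D‖) cofinite atTop := by
    simp only [norm_div, norm_intCast_eq_abs]
    exact (tendsto_norm_comp_cofinite_atTop_of_isClosedEmbedding
      Int.isClosedEmbedding_coe_real).atTop_div_const (norm_pos_iff.2 hD)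
  have hbdd : (fun n ↦ a n - n / D) =O[cofinite] fun _ ↦ (1 : ℝ) :=
    .of_bound M (.of_forall fun n ↦ by simpa only [norm_one, mul_one] using ha n)
  exact hbdd.trans_isLittleO (Asymptotics.isLittleO_one_left_iff ℝ |>.2 hnorm)

theorem exists_norm_inv_le_div_abs_add_one (hD : D ≠ 0) (ha : ∀ n, ‖a n - n / D‖ ≤ M) :
    ∃ K : ℝ, ∀ n, ‖(a n)⁻¹‖ ≤ K / (|(n : ℝ)| + 1) := by
  have hlattice (n : ℤ) : ‖((n : 𝕜) / D)⁻¹‖ ≤ 2 * ‖D‖ * ‖(|(n : ℝ)| + 1)⁻¹‖ := by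
    rcases eq_or_ne n 0 with rfl | hn
    · simp
    have hn1 : (1 : ℝ) ≤ |(n : ℝ)| := mod_cast Int.one_le_abs hn
    rw [inv_div, norm_div, norm_intCast_eq_abs, norm_inv, Real.norm_of_nonneg (by positivity),
      ← div_eq_mul_inv, div_le_div_iff₀ (by positivity) (by positivity)]
    nlinarith [norm_nonneg D]
  have hO : (fun n ↦ (a n)⁻¹) =O[cofinite] fun n : ℤ ↦ (|(n : ℝ)| + 1)⁻¹ :=
    (isEquivalent_intCast_div hD ha).inv.isBigO.trans (.of_bound _ (.of_forall hlattice))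
  obtain ⟨K, hK⟩ := (Asymptotics.isBigO_cofinite_iff fun n hn ↦ by
    have : |(n : ℝ)| + 1 ≠ 0 := by positivity
    exact absurd hn (inv_ne_zero this)).1 hO
  refine ⟨K, fun n ↦ (hK n).trans_eq ?_⟩
  rw [Real.norm_of_nonneg (by positivity), div_eq_mul_inv]

theorem abs_norm_sub_abs_div_norm_le (ha : ∀ n, ‖a n - n / D‖ ≤ M) (n : ℤ) :
    |‖a n‖ - |(n : ℝ)| / ‖D‖| ≤ M := by
  simpa only [norm_div, norm_intCast_eq_abs] using (abs_norm_sub_norm_le _ _).trans (ha n)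

theorem abs_le_norm_mul_of_norm_le (hD : D ≠ 0) (ha : ∀ n, ‖a n - n / D‖ ≤ M) {n : ℤ} {N : ℝ}
    (hn : ‖a n‖ ≤ N) : |(n : ℝ)| ≤ (N + M) * ‖D‖ := by
  rw [← div_le_iff₀ (norm_pos_iff.2 hD)]
  linarith [abs_le.1 (abs_norm_sub_abs_div_norm_le ha n)]

theorem norm_mul_lt_abs_of_lt_norm (hD : D ≠ 0) (ha : ∀ n, ‖a n - n / D‖ ≤ M) {n : ℤ} {N : ℝ}
    (hn : N < ‖a n‖) : (N - M) * ‖D‖ < |(n : ℝ)| := by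
  rw [← lt_div_iff₀ (norm_pos_iff.2 hD)]
  linarith [abs_le.1 (abs_norm_sub_abs_div_norm_le ha n)]

theorem mem_Icc_neg_of_norm_le (hD : D ≠ 0) (ha : ∀ n, ‖a n - n / D‖ ≤ M) {n : ℤ} {N : ℝ}
    (hn : ‖a n‖ ≤ N) :
    n ∈ Finset.Icc (-(⌊(N + M) * ‖D‖⌋₊ : ℤ)) ⌊(N + M) * ‖D‖⌋₊ := by
  rw [Finset.mem_Icc, ← abs_le, Int.abs_eq_natAbs, Nat.cast_le]
  refine Nat.le_floor ?_
  rw [Nat.cast_natAbs, Int.cast_abs]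
  exact abs_le_norm_mul_of_norm_le hD ha hn

theorem finite_setOf_norm_le (hD : D ≠ 0) (ha : ∀ n, ‖a n - n / D‖ ≤ M) (N : ℝ) :
    {n | ‖a n‖ ≤ N}.Finite :=
  (Finset.finite_toSet _).subset fun _ hn ↦ mem_Icc_neg_of_norm_le hD ha hn

theorem card_Icc_neg_sdiff_le (hD : D ≠ 0) (ha : ∀ n, ‖a n - n / D‖ ≤ M) {N : ℝ} (hN : 0 ≤ N) :
    ((Finset.Icc (-(⌊(N + M) * ‖D‖⌋₊ : ℤ)) ⌊(N + M) * ‖D‖⌋₊ \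
      (finite_setOf_norm_le hD ha N).toFinset).card : ℝ) ≤ 2 * (2 * M * ‖D‖ + 1) := by
  have hM : 0 ≤ M := (norm_nonneg _).trans (ha 0)
  have hcard := card_le_of_forall_lt_abs_le (x := (N - M) * ‖D‖) (y := (N + M) * ‖D‖)
    (s := Finset.Icc (-(⌊(N + M) * ‖D‖⌋₊ : ℤ)) ⌊(N + M) * ‖D‖⌋₊ \
      (finite_setOf_norm_le hD ha N).toFinset) (by gcongr; linarith) fun n hn ↦ by
    rw [Finset.mem_sdiff, Set.Finite.mem_toFinset, Set.mem_ofPred_eq, not_le, Finset.mem_Icc,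
      ← abs_le] at hn
    refine ⟨norm_mul_lt_abs_of_lt_norm hD ha hn.2, ?_⟩
    calc |(n : ℝ)| ≤ ⌊(N + M) * ‖D‖⌋₊ := mod_cast hn.1
      _ ≤ (N + M) * ‖D‖ := Nat.floor_le (by positivity)
  linarith

theorem exists_norm_finsum_inv_le (hD : D ≠ 0) (ha : ∀ n, ‖a n - n / D‖ ≤ M)
    (hne : ∀ n, a n ≠ 0) : ∃ C : ℝ, ∀ N : ℝ, ‖∑ᶠ n ∈ {n | ‖a n‖ ≤ N}, (a n)⁻¹‖ ≤ C := by
  obtain ⟨K, hK⟩ := exists_norm_inv_le_div_abs_add_one hD ha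
  have hK0 : 0 ≤ K := by simpa using (norm_nonneg _).trans (hK 0)
  have hM : 0 ≤ M := (norm_nonneg _).trans (ha 0)
  have hbdd (n : ℤ) : ‖(a n)⁻¹‖ ≤ K :=
    (hK n).trans (div_le_self hK0 (le_add_of_nonneg_left (abs_nonneg _)))
  have hsum := summable_norm_inv_add_inv_neg ha hne hK
  refine ⟨K + ∑' n : ℕ, ‖(a ((n : ℤ) + 1))⁻¹ + (a (-((n : ℤ) + 1)))⁻¹‖ +
    2 * (2 * M * ‖D‖ + 1) * K, fun N ↦ ?_⟩
  rcases lt_or_ge N 0 with hN | hN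
  · have hempty (n : ℤ) : ¬ ‖a n‖ ≤ N := (hN.trans_le (norm_nonneg _)).not_ge
    simp only [Set.mem_ofPred_eq, hempty, finsum_false, finsum_zero, norm_zero]
    positivity
  · rw [finsum_mem_eq_finite_toFinset_sum _ (finite_setOf_norm_le hD ha N)]
    refine (norm_sum_le_of_subset_Icc_neg hbdd hsum fun n hn ↦
      mem_Icc_neg_of_norm_le hD ha ((finite_setOf_norm_le hD ha N).mem_toFinset.1 hn)).trans ?_
    gcongr
    exact card_Icc_neg_sdiff_le hD ha hN

end PerturbedLattice

/-- The two algebra structures leave room for `𝕜 = ℝ` and `𝕜 = ℂ`: `D` and `a` may be complex. -/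
theorem statement16_general {𝕜 : Type*} [NormedField 𝕜] [NormedAlgebra ℝ 𝕜] [NormedAlgebra 𝕜 ℂ]
    (D : 𝕜) (hD : D ≠ 0) (φ : ℤ → 𝕜) (hφ : ∃ M : ℝ, ∀ n : ℤ, ‖φ n‖ ≤ M)
    (a : ℤ → 𝕜) (ha : ∀ n : ℤ, a n = (n : 𝕜) / D + φ n) (hne : ∀ n : ℤ, a n ≠ 0) :
    ((∀ N : ℝ, {n : ℤ | ‖a n‖ ≤ N}.Finite) ∧
      ∃ M : ℝ, ∀ N : ℝ, ‖∑ᶠ n ∈ {n : ℤ | ‖a n‖ ≤ N}, 1 / a n‖ ≤ M) ∧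
    (Summable fun n : ℕ => ‖1 / a ((n : ℤ) + 1) + 1 / a (-((n : ℤ) + 1))‖) ∧
    (∃ f : ℂ → ℂ,
      TendstoLocallyUniformly
        (fun N : ℕ => fun z : ℂ => (1 - z / algebraMap 𝕜 ℂ (a 0)) *
          ∏ n ∈ Finset.range N,
            ((1 - z / algebraMap 𝕜 ℂ (a ((n : ℤ) + 1))) *
              (1 - z / algebraMap 𝕜 ℂ (a (-((n : ℤ) + 1))))))
        f atTop ∧
      Differentiable ℂ f ∧
      ∃ C σ : ℝ, 0 < C ∧ 0 < σ ∧ ∀ z : ℂ, ‖f z‖ ≤ C * Real.exp (σ * ‖z‖)) := by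
  obtain ⟨M, hM⟩ := hφ
  have hdist (n : ℤ) : ‖a n - n / D‖ ≤ M := by rw [ha, add_sub_cancel_left]; exact hM n
  obtain ⟨K, hK⟩ := exists_norm_inv_le_div_abs_add_one hD hdist
  have hsum := summable_norm_inv_add_inv_neg hdist hne hK
  simp only [one_div]
  refine ⟨⟨finite_setOf_norm_le hD hdist, exists_norm_finsum_inv_le hD hdist hne⟩, hsum, ?_⟩
  obtain ⟨f, hf, hdiff, σ, hσ, hgrowth⟩ :=
    exists_differentiable_tendstoLocallyUniformly_prod (K := K) (algebraMap 𝕜 ℂ (a 0)⁻¹)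
      (u := fun n ↦ algebraMap 𝕜 ℂ (a ((n : ℤ) + 1))⁻¹)
      (v := fun n ↦ algebraMap 𝕜 ℂ (a (-((n : ℤ) + 1)))⁻¹)
      (by simpa only [← map_add, norm_algebraMap'] using hsum)
      (by simpa only [← map_mul, norm_algebraMap'] using norm_inv_succ_mul_inv_neg_succ_le hK)
  exact ⟨f, by simpa only [map_inv₀, ← div_eq_inv_mul] using hf, hdiff,
    1, σ, one_pos, hσ, by simpa only [one_mul] using hgrowth⟩

/-- Let `D > 0`, `φ : ℤ → ℝ` bounded, `a_n = n/D + φ(n)`, all `a_n ≠ 0`.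
Then (i) the sets `{n : |a_n| ≤ N}` are finite and the partial sums `Σ_{|a_n| ≤ N} 1/a_n` are
uniformly bounded; (ii) `Σ_{n∈ℕ} |1/a_n + 1/a_{-n}| < ∞`; (iii) the canonical product
`f(z) = (1 - z/a_0) ∏_{n≥1} (1 - z/a_n)(1 - z/a_{-n})` converges locally uniformly on `ℂ`
to an entire function of exponential growth. -/
theorem statement16 (D : ℝ) (hD : 0 < D) (φ : ℤ → ℝ)
    (hφ : ∃ M : ℝ, ∀ n : ℤ, |φ n| ≤ M)
    (a : ℤ → ℝ) (ha : ∀ n : ℤ, a n = (n : ℝ) / D + φ n)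
    (hne : ∀ n : ℤ, a n ≠ 0) :
    -- (i)
    ((∀ N : ℝ, {n : ℤ | |a n| ≤ N}.Finite) ∧
      ∃ M : ℝ, ∀ N : ℝ, |∑ᶠ n ∈ {n : ℤ | |a n| ≤ N}, 1 / a n| ≤ M) ∧
    -- (ii)
    (Summable fun n : ℕ => |1 / a ((n : ℤ) + 1) + 1 / a (-((n : ℤ) + 1))|) ∧
    -- (iii)
    (∃ f : ℂ → ℂ,
      TendstoLocallyUniformly
        (fun N : ℕ => fun z : ℂ => (1 - z / (a 0 : ℂ)) *
          ∏ n ∈ Finset.range N,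
            ((1 - z / (a ((n : ℤ) + 1) : ℂ)) * (1 - z / (a (-((n : ℤ) + 1)) : ℂ))))
        f atTop ∧
      Differentiable ℂ f ∧
      ∃ C σ : ℝ, 0 < C ∧ 0 < σ ∧ ∀ z : ℂ, ‖f z‖ ≤ C * Real.exp (σ * ‖z‖)) := by
  exact statement16_general D hD.ne' φ hφ a ha hne

end
end
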